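/- Let u, v ∈ ℂ^{2^s} and û, v̂ > 0 with max_i |u_i| ≤ û and max_j |v_j| ≤ v̂. Let G_u be a unitary on ℂ^{2^s}⊗ℂ^{2^{b+1}} satisfying (I_{2^s}⊗⟨0^{b+1}|) G_u (|0^s⟩⊗|0^{b+1}⟩) = 2^{−s/2} Σ_{i<2^s} (u_i/û) |i⟩, and let G_v be a unitary on ℂ^{2^s}⊗ℂ^{2^{b+1}} satisfying the analogous identity with v and v̂. On ℂ^{2^s}⊗ℂ^{2^s}⊗ℂ^{2^{b+1}}⊗ℂ^{2^{b+1}}, let G̃_u denote G_u acting on tensor factors 1 and 3, G̃_v denote G_v acting on tensor factors 1 and 4, and SWAP₁₂ the exchange of the first two factors. Then for all 0 ≤ m, n < 2^s, ⟨0^s| ⟨m| ⟨0^{b+1}| ⟨0^{b+1}| (G̃_v† · SWAP₁₂ · G̃_u) |0^s⟩ |n⟩ |0^{b+1}⟩ |0^{b+1}⟩ = u_m v̄_n / (2^s û v̂); in particular G̃_v†·SWAP₁₂·G̃_u is a (2^s û v̂, s+2(b+1), 0)-block-encoding of the rank-one matrix u v† (with the second ℂ^{2^s} factor as system register). -/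

import Mathlib

/-!
`W (0,m,0,0) (0,n,0,0)` is a sum over intermediate basis states, and only one of them contributes.
Since `G̃_u` leaves factors 2 and 4 alone and `G̃_v†` leaves factors 2 and 3 alone, the state after
`G̃_u` has to be `(m, n, 0, 0)` and the state after the swap `(n, m, 0, 0)`. The entry is therefore
`conj (G_v (n,0) (0,0)) * G_u (m,0) (0,0)`, in which the two factors `2^{-s/2}` combine to `2^{-s}`.
Multiplying by `2^s û v̂` recovers `u v†` exactly, so the encoding error is the norm of `0`.
-/

open Matrix

/-- Spectral norm (ℓ²→ℓ² operator norm) of a matrix. -/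
noncomputable def specNorm {𝕜 : Type*} [RCLike 𝕜] {m n : Type*} [Fintype m] [Fintype n]
    [DecidableEq n] (A : Matrix m n 𝕜) : ℝ :=
  ‖LinearMap.toContinuousLinearMap (Matrix.toEuclideanLin A)‖

/-- A matrix is unitary. -/
def IsUnitary {n : Type*} [Fintype n] [DecidableEq n] (U : Matrix n n ℂ) : Prop :=
  Uᴴ * U = 1 ∧ U * Uᴴ = 1

/-- block-encoding of rank-1 operators with oracle access entries.
On `ℂ^{2^s}⊗ℂ^{2^s}⊗ℂ^{2^{b+1}}⊗ℂ^{2^{b+1}}`, the unitary `W = G̃_v† · SWAP₁₂ · G̃_u` has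
top-left entries `W (0,m,0,0) (0,n,0,0) = u_m v̄_n/(2^s û v̂)`; in particular it is a
`(2^s û v̂, s+2(b+1), 0)`-block-encoding of the rank-one matrix `u v†`
(second `ℂ^{2^s}` factor being the system register). -/
theorem rank_one_block_encoding (s b : ℕ) (u v : Fin (2 ^ s) → ℂ) (uhat vhat : ℝ)
    (huhat : 0 < uhat) (hvhat : 0 < vhat)
    (hu : ∀ i, ‖u i‖ ≤ uhat) (hv : ∀ j, ‖v j‖ ≤ vhat)
    (G_u G_v : Matrix (Fin (2 ^ s) × Fin (2 ^ (b + 1))) (Fin (2 ^ s) × Fin (2 ^ (b + 1))) ℂ)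
    (hGu_uni : IsUnitary G_u) (hGv_uni : IsUnitary G_v)
    (hGu : ∀ i : Fin (2 ^ s),
      G_u (i, 0) (0, 0) = u i / ((uhat : ℂ) * (Real.sqrt ((2 : ℝ) ^ s) : ℂ)))
    (hGv : ∀ i : Fin (2 ^ s),
      G_v (i, 0) (0, 0) = v i / ((vhat : ℂ) * (Real.sqrt ((2 : ℝ) ^ s) : ℂ)))
    (W : Matrix (Fin (2 ^ s) × Fin (2 ^ s) × Fin (2 ^ (b + 1)) × Fin (2 ^ (b + 1)))
        (Fin (2 ^ s) × Fin (2 ^ s) × Fin (2 ^ (b + 1)) × Fin (2 ^ (b + 1))) ℂ)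
    (hW : W =
      (Matrix.of fun (x y :
          Fin (2 ^ s) × Fin (2 ^ s) × Fin (2 ^ (b + 1)) × Fin (2 ^ (b + 1))) =>
        (starRingEnd ℂ) (G_v (y.1, y.2.2.2) (x.1, x.2.2.2)) *
          (if x.2.1 = y.2.1 ∧ x.2.2.1 = y.2.2.1 then 1 else 0)) *
      (Matrix.of fun (x y :
          Fin (2 ^ s) × Fin (2 ^ s) × Fin (2 ^ (b + 1)) × Fin (2 ^ (b + 1))) =>
        if x.1 = y.2.1 ∧ x.2.1 = y.1 ∧ x.2.2 = y.2.2 then 1 else 0) *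
      (Matrix.of fun (x y :
          Fin (2 ^ s) × Fin (2 ^ s) × Fin (2 ^ (b + 1)) × Fin (2 ^ (b + 1))) =>
        G_u (x.1, x.2.2.1) (y.1, y.2.2.1) *
          (if x.2.1 = y.2.1 ∧ x.2.2.2 = y.2.2.2 then 1 else 0))) :
    (∀ m n : Fin (2 ^ s),
      W (0, m, 0, 0) (0, n, 0, 0)
        = u m * (starRingEnd ℂ) (v n) / ((2 : ℂ) ^ s * (uhat : ℂ) * (vhat : ℂ))) ∧
    specNorm
      ((Matrix.of fun m' n' => u m' * (starRingEnd ℂ) (v n')) -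
        (((2 : ℝ) ^ s * uhat * vhat : ℝ) : ℂ) •
          Matrix.of (fun (m' n' : Fin (2 ^ s)) => W (0, m', 0, 0) (0, n', 0, 0))) ≤ 0 := by
  have h2 : (Real.sqrt ((2 : ℝ) ^ s) : ℂ) * (Real.sqrt ((2 : ℝ) ^ s) : ℂ) = (2 : ℂ) ^ s := by
    rw [← Complex.ofReal_mul, Real.mul_self_sqrt (by positivity)]
    push_cast
    rfl
  have hu0 : (uhat : ℂ) ≠ 0 := by exact_mod_cast huhat.ne'
  have hv0 : (vhat : ℂ) ≠ 0 := by exact_mod_cast hvhat.ne'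
  have hentry : ∀ m n : Fin (2 ^ s),
      W (0, m, 0, 0) (0, n, 0, 0)
        = u m * (starRingEnd ℂ) (v n) / ((2 : ℂ) ^ s * (uhat : ℂ) * (vhat : ℂ)) := by
    intro m n
    have hpath : W (0, m, 0, 0) (0, n, 0, 0)
        = (starRingEnd ℂ) (G_v (n, 0) (0, 0)) * G_u (m, 0) (0, 0) := by
      rw [hW, Matrix.mul_apply, Finset.sum_eq_single (m, n, 0, 0)]
      · rw [Matrix.mul_apply, Finset.sum_eq_single (n, m, 0, 0)]
        · simp
        · rintro ⟨x1, x2, x3, x4⟩ - hx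
          simp only [Matrix.of_apply, Prod.mk.injEq] at hx ⊢
          grind
        · simp
      · rintro ⟨y1, y2, y3, y4⟩ - hy
        by_cases hq : y2 = n ∧ y4 = 0
        · -- The last factor forces `y2 = n`, `y4 = 0`; the first two then force `y1 = m`, `y3 = 0`.
          rw [Matrix.mul_apply, Finset.sum_eq_zero, zero_mul]
          rintro ⟨x1, x2, x3, x4⟩ -
          simp only [Matrix.of_apply, ne_eq, Prod.mk.injEq] at hy ⊢
          grind
        · simp [hq]
      · simp
    rw [hpath, hGu, hGv, ← h2]
    simp only [map_div₀, map_mul, Complex.conj_ofReal]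
    rw [div_mul_div_comm]
    congr 1 <;> ring
  refine ⟨hentry, ?_⟩
  have hzero : (Matrix.of fun m' n' => u m' * (starRingEnd ℂ) (v n')) -
        (((2 : ℝ) ^ s * uhat * vhat : ℝ) : ℂ) •
          Matrix.of (fun (m' n' : Fin (2 ^ s)) => W (0, m', 0, 0) (0, n', 0, 0)) = 0 := by
    ext m n
    simp only [Matrix.sub_apply, Matrix.smul_apply, Matrix.of_apply, hentry, smul_eq_mul,
      Matrix.zero_apply]
    push_cast
    field_simp
    simp
  rw [hzero]
  simp [specNorm]
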